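/- Let ε > 0 and suppose (Z₁, Z₂, y) are positive reals with Z_i ≥ X^{5/6}(log X)⁵. Suppose A ⊆ {α ∈ ℝ : y < |α| ≤ 2y} is a measurable set such that every α ∈ A admits coprime integer pairs (a₁,q₁), (a₂,q₂) with a₁a₂ ≠ 0, q_i ≥ 1, q_i ≪ (X(log X)⁴/Z_i)², |q_iλ_iα − a_i| ≪ X(log X)^{10}/Z_i², where λ₁/λ₂ is irrational and q = X^{1/3} is a denominator of a convergent of λ₁/λ₂. Then the Lebesgue measure of A satisfies μ(A) ≪ y X^{8/3 + ε} Z₁^{−2} Z₂^{−2}. -/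

import Mathlib

open Real MeasureTheory

lemma divisor_bound (ε : ℝ) (hε : 0 < ε) :
    ∃ C : ℝ, 1 ≤ C ∧ ∀ n : ℕ, 0 < n → (n.divisors.card : ℝ) ≤ C * (n : ℝ) ^ ε := by
  have hl2 : 0 < Real.log 2 := Real.log_pos (by norm_num)
  set K : ℝ := 1 + 1 / (ε * Real.log 2) with hK
  have hK1 : 1 ≤ K := by
    have : 0 < 1 / (ε * Real.log 2) := by positivity
    linarith
  obtain ⟨B, hB⟩ := exists_nat_ge ((2 : ℝ) ^ (1 / ε))
  refine ⟨K ^ B, one_le_pow₀ hK1, fun n hn => ?_⟩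
  rw [Nat.card_divisors hn.ne']
  have hfac : ((n : ℝ)) ^ ε = ∏ p ∈ n.primeFactors, (((p : ℝ) ^ (n.factorization p)) ^ ε) := by
    rw [Real.finsetProd_rpow _ _ (fun i _ => by positivity)]
    congr 1
    conv_lhs => rw [← Nat.prod_factorization_pow_eq_self hn.ne']
    simp [Finsupp.prod]
  rw [hfac]
  push_cast
  have h1 : ∏ p ∈ n.primeFactors, ((n.factorization p : ℝ) + 1) ≤
      ∏ p ∈ n.primeFactors, ((if p < B then K else 1) * (((p : ℝ) ^ (n.factorization p)) ^ ε)) := by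
    apply Finset.prod_le_prod
    · intro i _; positivity
    · intro p hp
      have hp2 : 2 ≤ p := (Nat.prime_of_mem_primeFactors hp).two_le
      have hp2' : (2 : ℝ) ≤ p := by exact_mod_cast hp2
      set a := n.factorization p
      split_ifs with h
      · have h2 : (1 : ℝ) + a * (ε * Real.log 2) ≤ ((p : ℝ) ^ a) ^ ε := by
          calc (1 : ℝ) + a * (ε * Real.log 2) ≤ Real.exp (a * (ε * Real.log 2)) := by
                linarith [Real.add_one_le_exp ((a : ℝ) * (ε * Real.log 2))]
            _ = ((2 : ℝ) ^ a) ^ ε := by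
                rw [Real.rpow_def_of_pos (by positivity), Real.log_pow]; ring_nf
            _ ≤ _ := by gcongr
        calc (a : ℝ) + 1 ≤ K * (1 + a * (ε * Real.log 2)) := by
              have : K * (1 + a * (ε * Real.log 2)) = 1 + a + a * (ε * Real.log 2) + 1 / (ε * Real.log 2) := by
                rw [hK]; field_simp; ring
              rw [this]
              have : 0 < 1 / (ε * Real.log 2) := by positivity
              have : 0 ≤ a * (ε * Real.log 2) := by positivity
              linarith
          _ ≤ _ := by gcongr
      · rw [one_mul]
        have hpB : (2 : ℝ) ^ (1 / ε) ≤ p := hB.trans (by exact_mod_cast not_lt.mp h)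
        have hpe : (2 : ℝ) ≤ (p : ℝ) ^ ε := by
          calc (2 : ℝ) = ((2 : ℝ) ^ (1 / ε)) ^ ε := by
                rw [← Real.rpow_mul (by norm_num), one_div_mul_cancel hε.ne', Real.rpow_one]
            _ ≤ _ := by gcongr
        calc (a : ℝ) + 1 ≤ 2 ^ a := by exact_mod_cast Nat.lt_two_pow_self
          _ ≤ ((p : ℝ) ^ ε) ^ a := by gcongr
          _ = ((p : ℝ) ^ a) ^ ε := by
            rw [← Real.rpow_natCast, ← Real.rpow_natCast, ← Real.rpow_mul (by positivity),
              ← Real.rpow_mul (by positivity), mul_comm]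
  refine h1.trans ?_
  rw [Finset.prod_mul_distrib]
  gcongr
  rw [Finset.prod_ite]
  simp only [Finset.prod_const, one_pow, mul_one]
  apply pow_le_pow_right₀ hK1
  calc _ ≤ (Finset.range B).card := Finset.card_le_card (by
          intro x hx; simp at hx ⊢; exact hx.2)
    _ = B := by simp

lemma contsAux_int (θ : ℝ) (hθ : ∀ n, ¬ (GenContFract.of θ).TerminatedAt n) (n : ℕ) :
    (∃ a b : ℤ, (GenContFract.of θ).contsAux n = ⟨(a : ℝ), (b : ℝ)⟩) ∧
    (∃ a b : ℤ, (GenContFract.of θ).contsAux (n + 1) = ⟨(a : ℝ), (b : ℝ)⟩) := by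
  induction n with
  | zero =>
    refine ⟨⟨1, 0, ?_⟩, ⟨⌊θ⌋, 1, ?_⟩⟩
    · simp [GenContFract.contsAux]
    · simp [GenContFract.contsAux, GenContFract.of_h_eq_floor]
  | succ n ih =>
    obtain ⟨⟨a, b, h1⟩, ⟨c, d, h2⟩⟩ := ih
    refine ⟨⟨c, d, h2⟩, ?_⟩
    obtain ⟨gp, hgp⟩ : ∃ gp, (GenContFract.of θ).s.get? n = some gp :=
      Option.ne_none_iff_exists'.1 (hθ n)
    obtain ⟨e1, z, e2⟩ := GenContFract.of_partNum_eq_one_and_exists_int_partDen_eq hgp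
    refine ⟨z * c + a, z * d + b, ?_⟩
    rw [GenContFract.contsAux_recurrence hgp h1 h2, e1, e2]
    push_cast
    simp

/-- weak form of the Legendre law -/
lemma legendre (θ : ℝ) (hθ : Irrational θ) (q m : ℕ) (hq : 0 < q)
    (hqm : (q : ℝ) = (GenContFract.of θ).dens m) (n : ℕ) (hn : 0 < n) (k : ℤ)
    (h : |(n : ℝ) * θ - k| < 1 / (2 * q)) : q < 2 * n := by
  have hT : ∀ n, ¬ (GenContFract.of θ).TerminatedAt n := by
    intro n hn
    obtain ⟨x, hx⟩ := (GenContFract.terminates_iff_rat θ).1 ⟨n, hn⟩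
    exact hθ ⟨x, hx.symm⟩
  obtain ⟨-, p, d, h1⟩ := contsAux_int θ hT m
  obtain ⟨-, p', d', h2⟩ := contsAux_int θ hT (m + 1)
  have hn1 : (GenContFract.of θ).nums m = p := by
    rw [GenContFract.num_eq_conts_a, GenContFract.nth_cont_eq_succ_nth_contAux, h1]
  have hn2 : (GenContFract.of θ).nums (m + 1) = p' := by
    rw [GenContFract.num_eq_conts_a, GenContFract.nth_cont_eq_succ_nth_contAux, h2]
  have hd2 : (GenContFract.of θ).dens (m + 1) = d' := by
    rw [GenContFract.den_eq_conts_b, GenContFract.nth_cont_eq_succ_nth_contAux, h2]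
  have hdet := SimpContFract.determinant (s := SimpContFract.of θ) (hT m)
  have e : ((SimpContFract.of θ : SimpContFract ℝ) : GenContFract ℝ) = GenContFract.of θ := rfl
  rw [e, hn1, hn2, hd2, ← hqm] at hdet
  have hdetZ : p * d' - q * p' = (-1) ^ (m + 1) := by exact_mod_cast hdet
  have hcop : IsCoprime (q : ℤ) p := by
    rcases neg_one_pow_eq_or ℤ (m + 1) with h | h <;> rw [h] at hdetZ
    · exact ⟨-p', d', by linarith⟩
    · exact ⟨p', -d', by linarith⟩
  have hq' : (0 : ℝ) < q := by exact_mod_cast hq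
  have happ : |θ - p / q| ≤ 1 / ((q : ℝ) * q) := by
    have := GenContFract.abs_sub_convs_le (hT m)
    rw [GenContFract.conv_eq_num_div_den, hn1, ← hqm] at this
    refine this.trans ?_
    have hmono := GenContFract.of_den_mono (v := θ) (n := m)
    rw [← hqm] at hmono
    gcongr
  by_contra! hcon
  have hne : (n : ℤ) * p - k * q ≠ 0 := by
    intro h0
    have : (q : ℤ) ∣ n * p := ⟨k, by linarith⟩
    have := hcop.dvd_of_dvd_mul_right this
    have := Nat.le_of_dvd hn (by exact_mod_cast this)
    omega
  have h1 : (1 : ℝ) ≤ |(n : ℝ) * p - k * q| := by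
    have := Int.one_le_abs hne
    exact_mod_cast this
  have hid : (n : ℝ) * p - k * q = q * (n * θ - k) - n * (q * (θ - p / q)) := by
    field_simp; ring
  have hA : |q * ((n : ℝ) * θ - k)| < 1 / 2 := by
    rw [abs_mul, abs_of_pos hq']
    calc _ < (q : ℝ) * (1 / (2 * q)) := by gcongr
      _ = _ := by field_simp
  have hB : |(n : ℝ) * (q * (θ - p / q))| ≤ 1 / 2 := by
    rw [abs_mul, abs_mul, abs_of_pos hq', Nat.abs_cast]
    have : (2 * n : ℝ) ≤ q := by exact_mod_cast hcon
    calc _ ≤ (n : ℝ) * (q * (1 / ((q : ℝ) * q))) := by gcongr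
      _ = n / q := by field_simp
      _ ≤ _ := by rw [div_le_iff₀ hq']; linarith
  rw [hid] at h1
  have := abs_sub (q * ((n : ℝ) * θ - k)) ((n : ℝ) * (q * (θ - p / q)))
  linarith

lemma sum_inv_sqrt (N : ℕ) : ∑ k ∈ Finset.Icc 1 N, 1 / √(k : ℝ) ≤ 2 * √(N : ℝ) := by
  induction N with
  | zero => simp
  | succ n ih =>
    rw [Finset.sum_Icc_succ_top (by omega)]
    have hs : 0 < √((n + 1 : ℕ) : ℝ) := by positivity
    have h1 : √((n + 1 : ℕ) : ℝ) ^ 2 = n + 1 := by rw [Real.sq_sqrt (by positivity)]; push_cast; ring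
    have h2 : √(n : ℝ) ^ 2 = n := by rw [Real.sq_sqrt (by positivity)]
    have h3 : 1 / √((n + 1 : ℕ) : ℝ) ≤ 2 * √((n + 1 : ℕ) : ℝ) - 2 * √(n : ℝ) := by
      rw [div_le_iff₀ hs]
      nlinarith [sq_nonneg (√((n + 1 : ℕ) : ℝ) - √(n : ℝ))]
    linarith

lemma spaced_sum (q : ℕ) (hq : 0 < q) (M : ℝ) (S : Finset ℕ)
    (h1 : ∀ r ∈ S, q < 2 * r) (hM : ∀ r ∈ S, (r : ℝ) ≤ M)
    (h2 : ∀ r ∈ S, ∀ s ∈ S, r < s → q < 2 * (s - r)) :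
    ∑ r ∈ S, 1 / √(r : ℝ) ≤ 4 * √M / q := by
  have hq' : (0 : ℝ) < q := by exact_mod_cast hq
  have hinj : Set.InjOn (fun r => 2 * r / q) (S : Set ℕ) := by
    have key : ∀ r ∈ S, ∀ s ∈ S, r < s → 2 * r / q ≠ 2 * s / q := by
      intro r hr s hs hrs
      have := h2 r hr s hs hrs
      have h3 : 2 * r + q ≤ 2 * s := by omega
      have := Nat.div_le_div_right (c := q) h3
      rw [Nat.add_div_right _ hq] at this
      omega
    intro r hr s hs hrs
    by_contra hne
    rcases lt_or_gt_of_ne hne with h | h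
    · exact key r hr s hs h hrs
    · exact key s hs r hr h hrs.symm
  calc ∑ r ∈ S, 1 / √(r : ℝ) ≤ ∑ r ∈ S, √(2 / q) * (1 / √((2 * r / q : ℕ) : ℝ)) := by
        apply Finset.sum_le_sum
        intro r hr
        have hk : 0 < 2 * r / q := Nat.div_pos (h1 r hr).le hq
        have hk' : (0 : ℝ) < (2 * r / q : ℕ) := by exact_mod_cast hk
        have hle : ((2 * r / q : ℕ) : ℝ) ≤ 2 * r / q := by
          have := @Nat.cast_div_le ℝ _ _ _ (2 * r) q
          push_cast at this; exact this
        have hr0 : (0 : ℝ) < r := by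
          have := h1 r hr
          have : 0 < r := by omega
          exact_mod_cast this
        rw [mul_one_div, ← Real.sqrt_div (by positivity), ← Real.sqrt_one,
          ← Real.sqrt_div (by positivity)]
        apply Real.sqrt_le_sqrt
        rw [div_div, div_le_div_iff₀ hr0 (by positivity)]
        rw [le_div_iff₀ hq'] at hle
        linarith
    _ = √(2 / q) * ∑ k ∈ S.image (fun r => 2 * r / q), 1 / √(k : ℝ) := by
        rw [Finset.sum_image hinj, Finset.mul_sum]
    _ ≤ √(2 / q) * ∑ k ∈ Finset.Icc 1 ⌊2 * M / q⌋₊, 1 / √(k : ℝ) := by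
        apply mul_le_mul_of_nonneg_left _ (by positivity)
        apply Finset.sum_le_sum_of_subset_of_nonneg
        · intro k hk
          obtain ⟨r, hr, rfl⟩ := Finset.mem_image.1 hk
          rw [Finset.mem_Icc]
          refine ⟨Nat.div_pos (h1 r hr).le hq, Nat.le_floor ?_⟩
          have := @Nat.cast_div_le ℝ _ _ _ (2 * r) q
          push_cast at this
          refine this.trans ?_
          have := hM r hr
          gcongr
        · intros; positivity
    _ ≤ √(2 / q) * (2 * √(⌊2 * M / q⌋₊ : ℝ)) := by
        gcongr; exact sum_inv_sqrt _
    _ ≤ √(2 / q) * (2 * √(2 * M / q)) := by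
        rcases S.eq_empty_or_nonempty with h | ⟨r, hr⟩
        · rcases le_total 0 M with h0 | h0
          · gcongr; exact Nat.floor_le (by positivity)
          · have : ⌊2 * M / q⌋₊ = 0 := Nat.floor_of_nonpos (div_nonpos_of_nonpos_of_nonneg (by linarith) hq'.le)
            rw [this, Nat.cast_zero, Real.sqrt_zero, mul_zero, mul_zero]; positivity
        · have h0 : 0 ≤ M := (Nat.cast_nonneg r).trans (hM r hr)
          gcongr; exact Nat.floor_le (by positivity)
    _ = 4 * √M / q := by
        have : 2 * M / q = (2 / q) * M := by ring
        rw [this, Real.sqrt_mul (by positivity)]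
        have h3 : √(2 / (q : ℝ)) * √(2 / (q : ℝ)) = 2 / q := Real.mul_self_sqrt (by positivity)
        calc _ = 2 * (√(2 / (q : ℝ)) * √(2 / (q : ℝ))) * √M := by ring
          _ = _ := by rw [h3]; ring

/-- β ≤ H with both products close to positive integers -/
def goodSet (l₁ l₂ δ₁ δ₂ H : ℝ) (q₁ q₂ : ℕ) : Set ℝ :=
  {β : ℝ | β ≤ H ∧ ∃ b₁ b₂ : ℕ, 0 < b₁ ∧ 0 < b₂ ∧
    |(q₁ : ℝ) * l₁ * β - b₁| ≤ δ₁ ∧ |(q₂ : ℝ) * l₂ * β - b₂| ≤ δ₂}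

/-- the piece of goodSet with prescribed integers -/
def piece (l₁ l₂ δ₁ δ₂ H : ℝ) (q₁ q₂ b₁ b₂ : ℕ) : Set ℝ :=
  {β : ℝ | β ≤ H ∧ |(q₁ : ℝ) * l₁ * β - b₁| ≤ δ₁ ∧ |(q₂ : ℝ) * l₂ * β - b₂| ≤ δ₂}

lemma vol_le_min (x₁ x₂ w₁ w₂ : ℝ) (hw₁ : 0 < w₁) (hw₂ : 0 < w₂) (δ₁ δ₂ : ℝ)
    (hδ₁ : 0 ≤ δ₁) (hδ₂ : 0 ≤ δ₂) (S : Set ℝ)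
    (h : ∀ β ∈ S, |w₁ * β - x₁| ≤ δ₁ ∧ |w₂ * β - x₂| ≤ δ₂) :
    volume S ≤ ENNReal.ofReal (2 * √(δ₁ * δ₂ / (w₁ * w₂))) := by
  have one : ∀ x w δ : ℝ, 0 < w → (∀ β ∈ S, |w * β - x| ≤ δ) →
      volume S ≤ ENNReal.ofReal (2 * (δ / w)) := by
    intro x w δ hw hS
    have hsub : S ⊆ Set.Icc ((x - δ) / w) ((x + δ) / w) := by
      intro β hβ
      have := abs_le.1 (hS β hβ)
      rw [Set.mem_Icc, div_le_iff₀ hw, le_div_iff₀ hw]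
      constructor <;> linarith
    refine (measure_mono hsub).trans ?_
    rw [Real.volume_Icc]
    apply ENNReal.ofReal_le_ofReal
    apply le_of_eq
    ring
  have a1 := one x₁ w₁ δ₁ hw₁ (fun β hβ => (h β hβ).1)
  have a2 := one x₂ w₂ δ₂ hw₂ (fun β hβ => (h β hβ).2)
  have e : δ₁ * δ₂ / (w₁ * w₂) = (δ₁ / w₁) * (δ₂ / w₂) := by field_simp
  have p1 : 0 ≤ δ₁ / w₁ := by positivity
  have p2 : 0 ≤ δ₂ / w₂ := by positivity
  rcases le_total (δ₁ / w₁) (δ₂ / w₂) with hle | hle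
  · refine a1.trans (ENNReal.ofReal_le_ofReal ?_)
    rw [e]
    have := Real.le_sqrt_of_sq_le (x := δ₁ / w₁) (y := (δ₁ / w₁) * (δ₂ / w₂)) (by nlinarith)
    linarith
  · refine a2.trans (ENNReal.ofReal_le_ofReal ?_)
    rw [e]
    have := Real.le_sqrt_of_sq_le (x := δ₂ / w₂) (y := (δ₁ / w₁) * (δ₂ / w₂)) (by nlinarith)
    linarith

lemma piece_facts (l₁ l₂ δ₁ δ₂ H : ℝ) (hl₁ : 0 < l₁) (hl₂ : 0 < l₂)
    (hδ₁ : 0 ≤ δ₁) (hδ₂ : 0 ≤ δ₂) (hδ₁' : δ₁ ≤ 1 / 2) (hδ₂' : δ₂ ≤ 1 / 2)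
    (q N₁ N₂ : ℕ) (hq : 0 < q)
    (hsmall : δ₁ * N₂ * l₂ + δ₂ * N₁ * l₁ < l₂ / (4 * q))
    (q₁ q₂ b₁ b₂ : ℕ) (hb₁ : 0 < b₁) (hb₂ : 0 < b₂) (hN₁ : q₁ ≤ N₁) (hN₂ : q₂ ≤ N₂)
    (hne : (piece l₁ l₂ δ₁ δ₂ H q₁ q₂ b₁ b₂).Nonempty) :
    (b₁ : ℝ) ≤ 2 * (q₁ * l₁ * H) ∧ (b₂ : ℝ) ≤ 2 * (q₂ * l₂ * H) ∧
    |((b₂ * q₁ : ℕ) : ℝ) * (l₁ / l₂) - ((b₁ * q₂ : ℕ) : ℤ)| < 1 / (4 * q) := by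
  obtain ⟨β, hβ, h1, h2⟩ := hne
  have hb₁' : (1 : ℝ) ≤ b₁ := by exact_mod_cast hb₁
  have hb₂' : (1 : ℝ) ≤ b₂ := by exact_mod_cast hb₂
  have hN₁' : (q₁ : ℝ) ≤ N₁ := by exact_mod_cast hN₁
  have hN₂' : (q₂ : ℝ) ≤ N₂ := by exact_mod_cast hN₂
  have hq' : (0 : ℝ) < q := by exact_mod_cast hq
  have k1 : (q₁ : ℝ) * l₁ * β ≤ q₁ * l₁ * H := by gcongr
  have k2 : (q₂ : ℝ) * l₂ * β ≤ q₂ * l₂ * H := by gcongr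
  refine ⟨?_, ?_, ?_⟩
  · have := abs_le.1 h1
    linarith
  · have := abs_le.1 h2
    linarith
  · push_cast
    have e : (b₂ : ℝ) * q₁ * (l₁ / l₂) - b₁ * q₂ =
        ((q₁ * l₁ * β - b₁) * (q₂ * l₂) - (q₂ * l₂ * β - b₂) * (q₁ * l₁)) / l₂ := by
      field_simp; ring
    rw [e, abs_div, abs_of_pos hl₂, div_lt_iff₀ hl₂]
    have t := abs_sub ((q₁ * l₁ * β - b₁) * (q₂ * l₂)) ((q₂ * l₂ * β - b₂) * (q₁ * l₁))
    rw [abs_mul, abs_mul _ ((q₁ : ℝ) * l₁), abs_of_nonneg (show (0 : ℝ) ≤ q₂ * l₂ by positivity),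
      abs_of_nonneg (show (0 : ℝ) ≤ q₁ * l₁ by positivity)] at t
    refine t.trans_lt ?_
    calc _ ≤ δ₁ * (N₂ * l₂) + δ₂ * (N₁ * l₁) := by gcongr
      _ = δ₁ * N₂ * l₂ + δ₂ * N₁ * l₁ := by ring
      _ < l₂ / (4 * q) := hsmall
      _ = _ := by ring

lemma core (l₁ l₂ δ₁ δ₂ H K W : ℝ) (hl₁ : 0 < l₁) (hl₂ : 0 < l₂) (hH : 0 < H)
    (hδ₁ : 0 ≤ δ₁) (hδ₂ : 0 ≤ δ₂) (hδ₁' : δ₁ ≤ 1 / 2) (hδ₂' : δ₂ ≤ 1 / 2)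
    (q N₁ N₂ : ℕ) (hq : 0 < q)
    (hsmall : δ₁ * N₂ * l₂ + δ₂ * N₁ * l₁ < l₂ / (4 * q))
    (hleg : ∀ n : ℕ, 0 < n → ∀ k : ℤ, |(n : ℝ) * (l₁ / l₂) - k| < 1 / (2 * q) → q < 2 * n)
    (hW₁ : 2 * l₁ * N₁ * N₂ * H ≤ W) (hW₂ : 2 * l₂ * N₁ * N₂ * H ≤ W)
    (hK : ∀ n : ℕ, 0 < n → (n : ℝ) ≤ W → (n.divisors.card : ℝ) ≤ K) :
    ∑ p ∈ Finset.Icc 1 N₁ ×ˢ Finset.Icc 1 N₂, volume (goodSet l₁ l₂ δ₁ δ₂ H p.1 p.2) ≤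
      ENNReal.ofReal (K ^ 2 * (16 * √(l₂ / l₁) * H * √(δ₁ * δ₂ * N₁ * N₂) / q)) := by
  classical
  have hq' : (0 : ℝ) < q := by exact_mod_cast hq
  set Bx : Finset (ℕ × ℕ) := Finset.Icc 1 ⌊2 * (N₁ * l₁ * H)⌋₊ ×ˢ Finset.Icc 1 ⌊2 * (N₂ * l₂ * H)⌋₊ with hBx
  set P : Finset (ℕ × ℕ) := Finset.Icc 1 N₁ ×ˢ Finset.Icc 1 N₂ with hP
  let pc : (ℕ × ℕ) × (ℕ × ℕ) → Set ℝ := fun t => piece l₁ l₂ δ₁ δ₂ H t.1.1 t.1.2 t.2.1 t.2.2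
  set T : Finset ((ℕ × ℕ) × (ℕ × ℕ)) := (P ×ˢ Bx).filter (fun t => (pc t).Nonempty) with hT
  have facts := piece_facts l₁ l₂ δ₁ δ₂ H hl₁ hl₂ hδ₁ hδ₂ hδ₁' hδ₂' q N₁ N₂ hq hsmall
  -- step 1: pass to the finite set of quadruples
  have s1 : ∑ p ∈ P, volume (goodSet l₁ l₂ δ₁ δ₂ H p.1 p.2) ≤ ∑ t ∈ T, volume (pc t) := by
    have : ∑ t ∈ T, volume (pc t) = ∑ t ∈ P ×ˢ Bx, volume (pc t) := by
      rw [hT, Finset.sum_filter_of_ne]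
      intro t _ hne
      by_contra hcon
      rw [Set.not_nonempty_iff_eq_empty] at hcon
      rw [hcon] at hne
      simp at hne
    rw [this, Finset.sum_product P Bx]
    apply Finset.sum_le_sum
    intro p hp
    rw [hP, Finset.mem_product, Finset.mem_Icc, Finset.mem_Icc] at hp
    have hsub : goodSet l₁ l₂ δ₁ δ₂ H p.1 p.2 ⊆ ⋃ b ∈ Bx, pc (p, b) := by
      rintro β ⟨hβ, b₁, b₂, hb₁, hb₂, h1, h2⟩
      obtain ⟨f1, f2, -⟩ := facts p.1 p.2 b₁ b₂ hb₁ hb₂ hp.1.2 hp.2.2 ⟨β, hβ, h1, h2⟩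
      simp only [Set.mem_iUnion]
      refine ⟨(b₁, b₂), ?_, ⟨hβ, h1, h2⟩⟩
      have hN₁' : (p.1 : ℝ) ≤ N₁ := by exact_mod_cast hp.1.2
      have hN₂' : (p.2 : ℝ) ≤ N₂ := by exact_mod_cast hp.2.2
      rw [hBx, Finset.mem_product, Finset.mem_Icc, Finset.mem_Icc]
      refine ⟨⟨hb₁, Nat.le_floor (f1.trans ?_)⟩, ⟨hb₂, Nat.le_floor (f2.trans ?_)⟩⟩ <;> gcongr
    exact (measure_mono hsub).trans (measure_biUnion_finset_le _ _)
  -- membership in T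
  have mem : ∀ t ∈ T, 0 < t.1.1 ∧ 0 < t.1.2 ∧ 0 < t.2.1 ∧ 0 < t.2.2 ∧ t.1.1 ≤ N₁ ∧ t.1.2 ≤ N₂ ∧
      (pc t).Nonempty := by
    intro t ht
    simp only [hT, hP, hBx, Finset.mem_filter, Finset.mem_product, Finset.mem_Icc] at ht
    obtain ⟨⟨⟨⟨h1, h2⟩, ⟨h3, h4⟩⟩, ⟨⟨h5, h6⟩, ⟨h7, h8⟩⟩⟩, h9⟩ := ht
    exact ⟨h1, h3, h5, h7, h2, h4, h9⟩
  let r : (ℕ × ℕ) × (ℕ × ℕ) → ℕ := fun t => t.2.2 * t.1.1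
  let s : (ℕ × ℕ) × (ℕ × ℕ) → ℕ := fun t => t.2.1 * t.1.2
  have tf : ∀ t ∈ T, |((r t : ℕ) : ℝ) * (l₁ / l₂) - ((s t : ℕ) : ℤ)| < 1 / (4 * q) ∧
      0 < r t ∧ 0 < s t ∧ (r t : ℝ) ≤ 2 * l₂ * t.1.1 * t.1.2 * H ∧
      (r t : ℝ) ≤ 2 * l₂ * N₁ * N₂ * H ∧ (s t : ℝ) ≤ 2 * l₁ * N₁ * N₂ * H := by
    intro t ht
    obtain ⟨h1, h2, h3, h4, h5, h6, h7⟩ := mem t ht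
    obtain ⟨f1, f2, f3⟩ := facts t.1.1 t.1.2 t.2.1 t.2.2 h3 h4 h5 h6 h7
    have hN₁' : (t.1.1 : ℝ) ≤ N₁ := by exact_mod_cast h5
    have hN₂' : (t.1.2 : ℝ) ≤ N₂ := by exact_mod_cast h6
    have g1 : (r t : ℝ) ≤ 2 * l₂ * t.1.1 * t.1.2 * H := by
      simp only [r]; push_cast
      calc (t.2.2 : ℝ) * t.1.1 ≤ (2 * (t.1.2 * l₂ * H)) * t.1.1 := by gcongr
        _ = _ := by ring
    refine ⟨f3, Nat.mul_pos h4 h1, Nat.mul_pos h3 h2, g1, g1.trans (by gcongr), ?_⟩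
    simp only [s]; push_cast
    calc (t.2.1 : ℝ) * t.1.2 ≤ (2 * (t.1.1 * l₁ * H)) * t.1.2 := by gcongr
      _ = 2 * l₁ * t.1.1 * t.1.2 * H := by ring
      _ ≤ _ := by gcongr
  -- step 2: lengths
  have s2 : ∑ t ∈ T, volume (pc t) ≤
      ENNReal.ofReal (∑ t ∈ T, 2 * √(2 * H * δ₁ * δ₂ / l₁) * (1 / √(r t : ℝ))) := by
    rw [ENNReal.ofReal_sum_of_nonneg (fun t _ => by positivity)]
    apply Finset.sum_le_sum
    intro t ht
    obtain ⟨h1, h2, h3, h4, h5, h6, h7⟩ := mem t ht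
    obtain ⟨f1, f2, f3, f4, f5, f6⟩ := tf t ht
    have h1' : (0 : ℝ) < t.1.1 := by exact_mod_cast h1
    have h2' : (0 : ℝ) < t.1.2 := by exact_mod_cast h2
    have f2' : (0 : ℝ) < r t := by exact_mod_cast f2
    refine (vol_le_min (t.2.1 : ℝ) (t.2.2 : ℝ) (t.1.1 * l₁) (t.1.2 * l₂) (by positivity)
      (by positivity) δ₁ δ₂ hδ₁ hδ₂ (pc t) (fun β hβ => hβ.2)).trans ?_
    apply ENNReal.ofReal_le_ofReal
    rw [mul_assoc 2 (√_)]
    apply mul_le_mul_of_nonneg_left _ (by norm_num)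
    rw [mul_one_div, ← Real.sqrt_div (by positivity)]
    apply Real.sqrt_le_sqrt
    rw [div_div, div_le_div_iff₀ (by positivity) (by positivity)]
    calc δ₁ * δ₂ * (l₁ * r t) ≤ δ₁ * δ₂ * (l₁ * (2 * l₂ * t.1.1 * t.1.2 * H)) := by gcongr
      _ = _ := by ring
  -- step 3: group by r
  have s3 : ∑ t ∈ T, 1 / √(r t : ℝ) ≤ K ^ 2 * ∑ n ∈ T.image r, 1 / √(n : ℝ) := by
    rw [← Finset.sum_fiberwise_of_maps_to (g := r) (t := T.image r)
      (fun t ht => Finset.mem_image_of_mem r ht), Finset.mul_sum]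
    apply Finset.sum_le_sum
    intro n hn
    obtain ⟨t₀, ht₀, hrt₀⟩ := Finset.mem_image.1 hn
    obtain ⟨f1, f2, f3, f4, f5, f6⟩ := tf t₀ ht₀
    have hcard : ((T.filter (fun t => r t = n)).card : ℝ) ≤ K ^ 2 := by
      have hle : (T.filter (fun t => r t = n)).card ≤
          ((r t₀).divisors ×ˢ (s t₀).divisors).card := by
        apply Finset.card_le_card_of_injOn (fun t => t.1)
        · intro t ht
          obtain ⟨htT, htn⟩ := Finset.mem_filter.1 ht
          obtain ⟨g1, -, -, -, -, -⟩ := tf t htT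
          have hr : r t = r t₀ := htn.trans hrt₀.symm
          have hs : s t = s t₀ := by
            rw [hr] at g1
            have := (abs_sub_lt_iff.1 g1)
            have := (abs_sub_lt_iff.1 f1)
            have hq1 : 1 / (4 * (q : ℝ)) ≤ 1 / 4 := by
              have : (1 : ℝ) ≤ q := by exact_mod_cast hq
              apply one_div_le_one_div_of_le (by norm_num); linarith
            have k1 : ((s t : ℤ) : ℝ) < ((s t₀ : ℤ) : ℝ) + 1 := by linarith
            have k2 : ((s t₀ : ℤ) : ℝ) < ((s t : ℤ) : ℝ) + 1 := by linarith
            have k1' : (s t : ℤ) < (s t₀ : ℤ) + 1 := by exact_mod_cast k1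
            have k2' : (s t₀ : ℤ) < (s t : ℤ) + 1 := by exact_mod_cast k2
            omega
          simp only [Finset.coe_product, Set.mem_prod, Finset.mem_coe, Nat.mem_divisors]
          refine ⟨⟨?_, f2.ne'⟩, ⟨?_, f3.ne'⟩⟩
          · rw [← hr]; exact Dvd.intro_left _ rfl
          · rw [← hs]; exact Dvd.intro_left _ rfl
        · intro t ht t' ht' htt
          obtain ⟨htT, htn⟩ := Finset.mem_filter.1 ht
          obtain ⟨htT', htn'⟩ := Finset.mem_filter.1 ht'
          obtain ⟨g1, -, -, -, -, -⟩ := tf t htT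
          obtain ⟨g1', -, -, -, -, -⟩ := tf t' htT'
          obtain ⟨h1, h2, -⟩ := mem t htT
          have hr : r t = r t' := htn.trans htn'.symm
          have hs : s t = s t' := by
            rw [hr] at g1
            have := (abs_sub_lt_iff.1 g1)
            have := (abs_sub_lt_iff.1 g1')
            have hq1 : 1 / (4 * (q : ℝ)) ≤ 1 / 4 := by
              have : (1 : ℝ) ≤ q := by exact_mod_cast hq
              apply one_div_le_one_div_of_le (by norm_num); linarith
            have k1 : ((s t : ℤ) : ℝ) < ((s t' : ℤ) : ℝ) + 1 := by linarith
            have k2 : ((s t' : ℤ) : ℝ) < ((s t : ℤ) : ℝ) + 1 := by linarith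
            have k1' : (s t : ℤ) < (s t' : ℤ) + 1 := by exact_mod_cast k1
            have k2' : (s t' : ℤ) < (s t : ℤ) + 1 := by exact_mod_cast k2
            omega
          simp only at htt
          simp only [r, s, ← htt] at hr hs
          have e1 := Nat.eq_of_mul_eq_mul_right h1 hr
          have e2 := Nat.eq_of_mul_eq_mul_right h2 hs
          exact Prod.ext htt (Prod.ext e2 e1)
      rw [Finset.card_product] at hle
      have c1 := hK (r t₀) f2 (f5.trans hW₂)
      have c2 := hK (s t₀) f3 (f6.trans hW₁)
      calc ((T.filter (fun t => r t = n)).card : ℝ) ≤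
            ((r t₀).divisors.card : ℝ) * ((s t₀).divisors.card : ℝ) := by exact_mod_cast hle
        _ ≤ K * K := mul_le_mul c1 c2 (by positivity) ((Nat.cast_nonneg _).trans c1)
        _ = K ^ 2 := by ring
    calc ∑ t ∈ T with r t = n, 1 / √(r t : ℝ) = ∑ t ∈ T with r t = n, 1 / √(n : ℝ) := by
          apply Finset.sum_congr rfl
          intro t ht
          rw [(Finset.mem_filter.1 ht).2]
      _ = ((T.filter (fun t => r t = n)).card : ℝ) * (1 / √(n : ℝ)) := by
          rw [Finset.sum_const, nsmul_eq_mul]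
      _ ≤ _ := by gcongr
  -- step 4: spacing
  have s4 : ∑ n ∈ T.image r, 1 / √(n : ℝ) ≤ 4 * √(2 * l₂ * N₁ * N₂ * H) / q := by
    have hq2 : 1 / (4 * (q : ℝ)) + 1 / (4 * (q : ℝ)) = 1 / (2 * q) := by field_simp; norm_num
    have hq3 : 0 < 1 / (4 * (q : ℝ)) := by positivity
    apply spaced_sum q hq
    · intro n hn
      obtain ⟨t, ht, rfl⟩ := Finset.mem_image.1 hn
      obtain ⟨f1, f2, -⟩ := tf t ht
      exact hleg _ f2 _ (f1.trans (by linarith))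
    · intro n hn
      obtain ⟨t, ht, rfl⟩ := Finset.mem_image.1 hn
      exact (tf t ht).2.2.2.2.1
    · intro n hn n' hn' hlt
      obtain ⟨t, ht, rfl⟩ := Finset.mem_image.1 hn
      obtain ⟨t', ht', rfl⟩ := Finset.mem_image.1 hn'
      obtain ⟨f1, -⟩ := tf t ht
      obtain ⟨f1', -⟩ := tf t' ht'
      apply hleg _ (by omega) ((s t' : ℤ) - (s t : ℤ))
      rw [Nat.cast_sub hlt.le]
      push_cast at f1 f1' ⊢
      have e : ((r t' : ℝ) - r t) * (l₁ / l₂) - ((s t' : ℝ) - s t) =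
        ((r t' : ℝ) * (l₁ / l₂) - s t') - ((r t : ℝ) * (l₁ / l₂) - s t) := by ring
      rw [e]
      refine (abs_sub _ _).trans_lt ?_
      linarith
  refine s1.trans (s2.trans (ENNReal.ofReal_le_ofReal ?_))
  rw [← Finset.mul_sum]
  calc 2 * √(2 * H * δ₁ * δ₂ / l₁) * ∑ t ∈ T, 1 / √(r t : ℝ)
      ≤ 2 * √(2 * H * δ₁ * δ₂ / l₁) * (K ^ 2 * (4 * √(2 * l₂ * N₁ * N₂ * H) / q)) := by
        gcongr
        exact s3.trans (by gcongr)
    _ = K ^ 2 * (8 * (√(2 * H * δ₁ * δ₂ / l₁) * √(2 * l₂ * N₁ * N₂ * H)) / q) := by ring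
    _ = _ := by
        have : √(2 * H * δ₁ * δ₂ / l₁) * √(2 * l₂ * N₁ * N₂ * H) =
            2 * H * (√(l₂ / l₁) * √(δ₁ * δ₂ * N₁ * N₂)) := by
          rw [← Real.sqrt_mul (by positivity), ← Real.sqrt_mul (by positivity)]
          have e : 2 * H * δ₁ * δ₂ / l₁ * (2 * l₂ * N₁ * N₂ * H) =
            (2 * H) ^ 2 * (l₂ / l₁ * (δ₁ * δ₂ * N₁ * N₂)) := by ring
          rw [e, Real.sqrt_mul (by positivity), Real.sqrt_sq (by positivity)]
        rw [this]; ring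

lemma vol_abs (G : Set ℝ) : volume {γ : ℝ | |γ| ∈ G} ≤ 2 * volume G := by
  have hsub : {γ : ℝ | |γ| ∈ G} ⊆ G ∪ (fun x => -x) ⁻¹' G := by
    intro γ hγ
    rcases abs_choice γ with h | h
    · left; rw [← h]; exact hγ
    · right; show -γ ∈ G; rw [← h]; exact hγ
  refine (measure_mono hsub).trans ((measure_union_le _ _).trans ?_)
  rw [Measure.measure_preimage_neg, two_mul]

lemma abs_mem_good (l₁ l₂ d₁ d₂ H γ : ℝ) (q₁ q₂ : ℕ) (a₁ a₂ : ℤ) (h₁ : a₁ ≠ 0) (h₂ : a₂ ≠ 0)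
    (hγ : |γ| ≤ H) (e₁ : |(q₁ : ℝ) * l₁ * γ - a₁| ≤ d₁) (e₂ : |(q₂ : ℝ) * l₂ * γ - a₂| ≤ d₂) :
    |γ| ∈ goodSet |l₁| |l₂| d₁ d₂ H q₁ q₂ := by
  have key : ∀ (q : ℕ) (l : ℝ) (a : ℤ),
      |(q : ℝ) * |l| * |γ| - a.natAbs| ≤ |(q : ℝ) * l * γ - a| := by
    intro q l a
    have := abs_abs_sub_abs_le ((q : ℝ) * l * γ) a
    rw [abs_mul, abs_mul, Nat.abs_cast] at this
    rwa [Nat.cast_natAbs, Int.cast_abs]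
  exact ⟨hγ, a₁.natAbs, a₂.natAbs, Int.natAbs_pos.2 h₁, Int.natAbs_pos.2 h₂,
    (key _ _ _).trans e₁, (key _ _ _).trans e₂⟩

lemma zero_excl (l₁ l₂ d₁ d₂ γ : ℝ) (q₁ q₂ N₂ : ℕ) (hq₁ : 0 < q₁) (hN₂ : q₂ ≤ N₂)
    (hd₂ : d₂ ≤ 1 / 2)
    (hz : 2 * d₁ * N₂ * |l₂| < |l₁|) (a₂ : ℤ)
    (e₁ : |(q₁ : ℝ) * l₁ * γ| ≤ d₁) (e₂ : |(q₂ : ℝ) * l₂ * γ - a₂| ≤ d₂) : a₂ = 0 := by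
  by_contra h
  have ha : (1 : ℝ) ≤ |(a₂ : ℝ)| := by exact_mod_cast Int.one_le_abs h
  have t := abs_sub_abs_le_abs_sub (a₂ : ℝ) ((q₂ : ℝ) * l₂ * γ)
  rw [abs_sub_comm] at t
  rw [abs_mul, abs_mul, Nat.abs_cast] at t e₁
  have hq₁' : (1 : ℝ) ≤ q₁ := by exact_mod_cast hq₁
  have hN : (q₂ : ℝ) ≤ N₂ := by exact_mod_cast hN₂
  have k1 : |l₁| * |γ| ≤ d₁ := by
    have : 0 ≤ |l₁| * |γ| := by positivity
    nlinarith
  have k2 : 1 / 2 ≤ (N₂ : ℝ) * |l₂| * |γ| := by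
    have : (q₂ : ℝ) * |l₂| * |γ| ≤ (N₂ : ℝ) * |l₂| * |γ| := by gcongr
    linarith
  have k3 : (N₂ : ℝ) * |l₂| * (|l₁| * |γ|) ≤ N₂ * |l₂| * d₁ := by gcongr
  have k4 : |l₁| * (1 / 2) ≤ |l₁| * ((N₂ : ℝ) * |l₂| * |γ|) := by gcongr
  linarith

/-- all γ in a symmetric window, integers allowed to vanish -/
def winSet (l₁ l₂ d₁ d₂ H : ℝ) (q₁ q₂ : ℕ) : Set ℝ :=
  {γ : ℝ | |γ| ≤ H ∧ ∃ a₁ a₂ : ℤ, |(q₁ : ℝ) * l₁ * γ - a₁| ≤ d₁ ∧ |(q₂ : ℝ) * l₂ * γ - a₂| ≤ d₂}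

lemma win_vol (l₁ l₂ d₁ d₂ H : ℝ) (hl₁ : l₁ ≠ 0) (hl₂ : l₂ ≠ 0) (q₁ q₂ N₁ N₂ : ℕ)
    (hq₁ : 0 < q₁) (hq₂ : 0 < q₂)
    (hN₁ : q₁ ≤ N₁) (hN₂ : q₂ ≤ N₂) (hd₁ : 0 ≤ d₁) (hd₂ : 0 ≤ d₂) (hd₁' : d₁ ≤ 1 / 2)
    (hd₂' : d₂ ≤ 1 / 2) (hz₁ : 2 * d₁ * N₂ * |l₂| < |l₁|) (hz₂ : 2 * d₂ * N₁ * |l₁| < |l₂|) :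
    volume (winSet l₁ l₂ d₁ d₂ H q₁ q₂) ≤
      ENNReal.ofReal (2 * √(d₁ * d₂ / (|l₁| * |l₂|)) * (1 / √(q₁ : ℝ) * (1 / √(q₂ : ℝ)))) +
      2 * volume (goodSet |l₁| |l₂| d₁ d₂ H q₁ q₂) := by
  have hsub : winSet l₁ l₂ d₁ d₂ H q₁ q₂ ⊆
      {γ : ℝ | |(q₁ : ℝ) * l₁ * γ| ≤ d₁ ∧ |(q₂ : ℝ) * l₂ * γ| ≤ d₂} ∪
      {γ : ℝ | |γ| ∈ goodSet |l₁| |l₂| d₁ d₂ H q₁ q₂} := by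
    rintro γ ⟨hγ, a₁, a₂, e₁, e₂⟩
    by_cases h₁ : a₁ = 0
    · left
      subst h₁
      simp only [Int.cast_zero, sub_zero] at e₁
      have := zero_excl l₁ l₂ d₁ d₂ γ q₁ q₂ N₂ hq₁ hN₂ hd₂' hz₁ a₂ e₁ e₂
      subst this
      simp only [Int.cast_zero, sub_zero] at e₂
      exact ⟨e₁, e₂⟩
    · by_cases h₂ : a₂ = 0
      · exfalso
        subst h₂
        simp only [Int.cast_zero, sub_zero] at e₂
        exact h₁ (zero_excl l₂ l₁ d₂ d₁ γ q₂ q₁ N₁ hq₂ hN₁ hd₁' hz₂ a₁ e₂ e₁)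
      · right
        exact abs_mem_good l₁ l₂ d₁ d₂ H γ q₁ q₂ a₁ a₂ h₁ h₂ hγ e₁ e₂
  refine (measure_mono hsub).trans ((measure_union_le _ _).trans ?_)
  refine add_le_add ?_ (vol_abs _)
  have hq₁' : (0 : ℝ) < q₁ := by exact_mod_cast hq₁
  have hq₂' : (0 : ℝ) < q₂ := by exact_mod_cast hq₂
  have hl₁' : 0 < |l₁| := abs_pos.2 hl₁
  have hl₂' : 0 < |l₂| := abs_pos.2 hl₂
  refine (vol_le_min 0 0 (q₁ * |l₁|) (q₂ * |l₂|) (by positivity) (by positivity) d₁ d₂ hd₁ hd₂ _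
    ?_).trans ?_
  · rintro β ⟨h1, h2⟩
    rw [sub_zero, sub_zero]
    rw [abs_mul, abs_mul] at h1 h2 ⊢
    rw [abs_mul, abs_mul, abs_abs, abs_abs]
    exact ⟨h1, h2⟩
  · apply ENNReal.ofReal_le_ofReal
    apply le_of_eq
    have e : d₁ * d₂ / (q₁ * |l₁| * (q₂ * |l₂|)) = d₁ * d₂ / (|l₁| * |l₂|) / (q₁ * q₂) := by
      field_simp
    rw [e, Real.sqrt_div (by positivity), Real.sqrt_mul hq₁'.le]
    field_simp

lemma mid (l₁ l₂ δ₁ δ₂ y K W : ℝ) (hl₁ : l₁ ≠ 0) (hl₂ : l₂ ≠ 0) (hy : 0 < y)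
    (hδ₁ : 0 ≤ δ₁) (hδ₂ : 0 ≤ δ₂) (hδ₁' : 2 * δ₁ ≤ 1 / 2) (hδ₂' : 2 * δ₂ ≤ 1 / 2)
    (q N₁ N₂ : ℕ) (hq : 0 < q)
    (hsmall : 2 * δ₁ * N₂ * |l₂| + 2 * δ₂ * N₁ * |l₁| < |l₂| / (4 * q))
    (hz₁ : 2 * (2 * δ₁) * N₂ * |l₂| < |l₁|) (hz₂ : 2 * (2 * δ₂) * N₁ * |l₁| < |l₂|)
    (hleg : ∀ n : ℕ, 0 < n → ∀ k : ℤ, |(n : ℝ) * (|l₁| / |l₂|) - k| < 1 / (2 * q) → q < 2 * n)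
    (hW₁ : 2 * |l₁| * N₁ * N₂ * (2 * q) ≤ W) (hW₂ : 2 * |l₂| * N₁ * N₂ * (2 * q) ≤ W)
    (hK1 : 1 ≤ K)
    (hK : ∀ n : ℕ, 0 < n → (n : ℝ) ≤ W → (n.divisors.card : ℝ) ≤ K)
    (A : Set ℝ) (hA : ∀ α ∈ A, |α| ≤ 2 * y)
    (hAA : ∀ α ∈ A, ∃ a₁ a₂ : ℤ, ∃ q₁ q₂ : ℕ, 0 < q₁ ∧ 0 < q₂ ∧ a₁ ≠ 0 ∧ a₂ ≠ 0 ∧ q₁ ≤ N₁ ∧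
      q₂ ≤ N₂ ∧ |(q₁ : ℝ) * l₁ * α - a₁| ≤ δ₁ ∧ |(q₂ : ℝ) * l₂ * α - a₂| ≤ δ₂) :
    volume A ≤ ENNReal.ofReal ((320 * √(|l₂| / |l₁|) + 80 * √(1 / (|l₁| * |l₂|))) * K ^ 2 * y *
      √(δ₁ * δ₂ * N₁ * N₂) / q) := by
  have hq' : (0 : ℝ) < q := by exact_mod_cast hq
  have hl₁' : 0 < |l₁| := abs_pos.2 hl₁
  have hl₂' : 0 < |l₂| := abs_pos.2 hl₂
  have core' := fun (H : ℝ) (hH : 0 < H) (hHq : H ≤ 2 * q) =>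
    core |l₁| |l₂| (2 * δ₁) (2 * δ₂) H K W hl₁' hl₂' hH (by positivity) (by positivity) hδ₁' hδ₂'
      q N₁ N₂ hq hsmall hleg (le_trans (by gcongr) hW₁) (le_trans (by gcongr) hW₂) hK
  have esq : √(2 * δ₁ * (2 * δ₂) * N₁ * N₂) = 2 * √(δ₁ * δ₂ * N₁ * N₂) := by
    have : 2 * δ₁ * (2 * δ₂) * N₁ * N₂ = 2 ^ 2 * (δ₁ * δ₂ * N₁ * N₂) := by ring
    rw [this, Real.sqrt_mul (by positivity), Real.sqrt_sq (by norm_num)]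
  set D := √(δ₁ * δ₂ * N₁ * N₂) with hD
  have hD0 : 0 ≤ D := Real.sqrt_nonneg _
  set P := Finset.Icc 1 N₁ ×ˢ Finset.Icc 1 N₂ with hP
  rcases le_or_gt y q with hyq | hyq
  · -- small y
    have hsub : A ⊆ ⋃ p ∈ P, {γ : ℝ | |γ| ∈ goodSet |l₁| |l₂| (2 * δ₁) (2 * δ₂) (2 * y) p.1 p.2} := by
      intro α hα
      obtain ⟨a₁, a₂, q₁, q₂, h1, h2, h3, h4, h5, h6, h7, h8⟩ := hAA α hα
      simp only [Set.mem_iUnion]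
      refine ⟨(q₁, q₂), ?_, ?_⟩
      · rw [hP, Finset.mem_product, Finset.mem_Icc, Finset.mem_Icc]; exact ⟨⟨h1, h5⟩, ⟨h2, h6⟩⟩
      · exact abs_mem_good l₁ l₂ _ _ _ α q₁ q₂ a₁ a₂ h3 h4 (hA α hα) (by linarith) (by linarith)
    calc volume A ≤ ∑ p ∈ P, 2 * volume (goodSet |l₁| |l₂| (2 * δ₁) (2 * δ₂) (2 * y) p.1 p.2) :=
          (measure_mono hsub).trans ((measure_biUnion_finset_le _ _).trans
            (Finset.sum_le_sum fun p _ => vol_abs _))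
      _ ≤ 2 * ENNReal.ofReal (K ^ 2 * (16 * √(|l₂| / |l₁|) * (2 * y) * (2 * D) / q)) := by
          rw [← Finset.mul_sum, ← esq]
          gcongr
          exact core' (2 * y) (by positivity) (by linarith)
      _ = ENNReal.ofReal (2 * (K ^ 2 * (16 * √(|l₂| / |l₁|) * (2 * y) * (2 * D) / q))) := by
          rw [ENNReal.ofReal_mul (p := 2) (by norm_num), ENNReal.ofReal_ofNat]
      _ ≤ _ := by
          apply ENNReal.ofReal_le_ofReal
          have e1 : 2 * (K ^ 2 * (16 * √(|l₂| / |l₁|) * (2 * y) * (2 * D) / q)) =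
            (128 * √(|l₂| / |l₁|)) * K ^ 2 * y * D / q := by ring
          rw [e1]
          gcongr
          have : 0 ≤ √(|l₂| / |l₁|) := Real.sqrt_nonneg _
          have : 0 ≤ √(1 / (|l₁| * |l₂|)) := Real.sqrt_nonneg _
          linarith
  · -- large y : windows of length q
    set M : ℕ := ⌊4 * y / q⌋₊ + 1 with hM
    have hMle : (M : ℝ) ≤ 5 * y / q := by
      have h1 : (⌊4 * y / q⌋₊ : ℝ) ≤ 4 * y / q := Nat.floor_le (by positivity)
      have h2 : 1 ≤ y / q := by rw [le_div_iff₀ hq']; linarith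
      have h3 : 5 * y / q = 4 * y / q + y / q := by ring
      rw [hM, h3]; push_cast; linarith
    let V : ℕ × ℕ → ℕ → Set ℝ := fun p j =>
      {α : ℝ | -(2 * y) + j * q ≤ α ∧ α ≤ -(2 * y) + (j + 1) * q ∧ ∃ a₁ a₂ : ℤ,
        |(p.1 : ℝ) * l₁ * α - a₁| ≤ δ₁ ∧ |(p.2 : ℝ) * l₂ * α - a₂| ≤ δ₂}
    have hsub : A ⊆ ⋃ p ∈ P, ⋃ j ∈ Finset.range M, V p j := by
      intro α hα
      obtain ⟨a₁, a₂, q₁, q₂, h1, h2, h3, h4, h5, h6, h7, h8⟩ := hAA α hα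
      have hα2 := abs_le.1 (hA α hα)
      simp only [Set.mem_iUnion]
      have hnn : 0 ≤ (α + 2 * y) / q := div_nonneg (by linarith) hq'.le
      refine ⟨(q₁, q₂), ?_, ⌊(α + 2 * y) / q⌋₊, ?_, ?_, ?_, a₁, a₂, h7, h8⟩
      · rw [hP, Finset.mem_product, Finset.mem_Icc, Finset.mem_Icc]; exact ⟨⟨h1, h5⟩, ⟨h2, h6⟩⟩
      · rw [Finset.mem_range, hM, Nat.lt_succ_iff]
        apply Nat.floor_le_floor
        gcongr
        linarith
      · have := Nat.floor_le hnn
        rw [le_div_iff₀ hq'] at this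
        linarith
      · have := Nat.lt_floor_add_one ((α + 2 * y) / q)
        rw [div_lt_iff₀ hq'] at this
        linarith
    have hV : ∀ p j, volume (V p j) ≤ volume (winSet l₁ l₂ (2 * δ₁) (2 * δ₂) q p.1 p.2) := by
      intro p j
      rcases (V p j).eq_empty_or_nonempty with h | ⟨α₀, hα₀⟩
      · rw [h]; simp
      · obtain ⟨u1, u2, a₁, a₂, u3, u4⟩ := hα₀
        have hs : V p j ⊆ (fun x => x + (-α₀)) ⁻¹' (winSet l₁ l₂ (2 * δ₁) (2 * δ₂) q p.1 p.2) := by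
          rintro α ⟨v1, v2, b₁, b₂, v3, v4⟩
          refine ⟨?_, b₁ - a₁, b₂ - a₂, ?_, ?_⟩
          · rw [abs_le]; constructor <;> linarith
          · have e : (p.1 : ℝ) * l₁ * (α + -α₀) - ((b₁ - a₁ : ℤ) : ℝ) =
              ((p.1 : ℝ) * l₁ * α - b₁) - ((p.1 : ℝ) * l₁ * α₀ - a₁) := by push_cast; ring
            rw [e]
            exact (abs_sub _ _).trans (by linarith)
          · have e : (p.2 : ℝ) * l₂ * (α + -α₀) - ((b₂ - a₂ : ℤ) : ℝ) =
              ((p.2 : ℝ) * l₂ * α - b₂) - ((p.2 : ℝ) * l₂ * α₀ - a₂) := by push_cast; ring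
            rw [e]
            exact (abs_sub _ _).trans (by linarith)
        refine (measure_mono hs).trans ?_
        rw [measure_preimage_add_right]
    have hzero : ∑ p ∈ P, (2 * √(2 * δ₁ * (2 * δ₂) / (|l₁| * |l₂|)) *
        (1 / √(p.1 : ℝ) * (1 / √(p.2 : ℝ)))) ≤ 16 * √(1 / (|l₁| * |l₂|)) * D := by
      rw [← Finset.mul_sum, hP, Finset.sum_product]
      simp only
      rw [← Finset.sum_mul_sum]
      have h1 := sum_inv_sqrt N₁
      have h2 := sum_inv_sqrt N₂
      calc _ ≤ 2 * √(2 * δ₁ * (2 * δ₂) / (|l₁| * |l₂|)) * ((2 * √(N₁ : ℝ)) * (2 * √(N₂ : ℝ))) := by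
            gcongr
        _ = 8 * (√(2 * δ₁ * (2 * δ₂) / (|l₁| * |l₂|)) * (√(N₁ : ℝ) * √(N₂ : ℝ))) := by ring
        _ = 8 * (√(1 / (|l₁| * |l₂|)) * √(2 * δ₁ * (2 * δ₂) * N₁ * N₂)) := by
            rw [← Real.sqrt_mul (by positivity), ← Real.sqrt_mul (by positivity),
              ← Real.sqrt_mul (by positivity)]
            congr 2
            ring
        _ = _ := by rw [esq]; ring
    have hsum : ∑ p ∈ P, volume (winSet l₁ l₂ (2 * δ₁) (2 * δ₂) q p.1 p.2) ≤
        ENNReal.ofReal (16 * √(1 / (|l₁| * |l₂|)) * D +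
          2 * (K ^ 2 * (16 * √(|l₂| / |l₁|) * q * (2 * D) / q))) := by
      calc _ ≤ ∑ p ∈ P, (ENNReal.ofReal (2 * √(2 * δ₁ * (2 * δ₂) / (|l₁| * |l₂|)) *
            (1 / √(p.1 : ℝ) * (1 / √(p.2 : ℝ)))) +
            2 * volume (goodSet |l₁| |l₂| (2 * δ₁) (2 * δ₂) q p.1 p.2)) := by
            apply Finset.sum_le_sum
            intro p hp
            rw [hP, Finset.mem_product, Finset.mem_Icc, Finset.mem_Icc] at hp
            exact win_vol l₁ l₂ _ _ q hl₁ hl₂ p.1 p.2 N₁ N₂ hp.1.1 hp.2.1 hp.1.2 hp.2.2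
              (by positivity) (by positivity) hδ₁' hδ₂' hz₁ hz₂
        _ ≤ _ := by
            rw [Finset.sum_add_distrib, ← Finset.mul_sum,
              ← ENNReal.ofReal_sum_of_nonneg (fun p _ => by positivity),
              ENNReal.ofReal_add (by positivity) (by positivity),
              ENNReal.ofReal_mul (p := 2) (by norm_num), ENNReal.ofReal_ofNat, ← esq]
            refine add_le_add (ENNReal.ofReal_le_ofReal ?_) ?_
            · exact hzero
            · gcongr
              exact core' q hq' (by linarith)
    calc volume A ≤ ∑ p ∈ P, ∑ j ∈ Finset.range M, volume (V p j) :=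
          (measure_mono hsub).trans ((measure_biUnion_finset_le _ _).trans
            (Finset.sum_le_sum fun p _ => measure_biUnion_finset_le _ _))
      _ ≤ ∑ p ∈ P, ∑ j ∈ Finset.range M, volume (winSet l₁ l₂ (2 * δ₁) (2 * δ₂) q p.1 p.2) :=
          Finset.sum_le_sum fun p _ => Finset.sum_le_sum fun j _ => hV p j
      _ = M * ∑ p ∈ P, volume (winSet l₁ l₂ (2 * δ₁) (2 * δ₂) q p.1 p.2) := by
          simp only [Finset.sum_const, Finset.card_range, nsmul_eq_mul]
          rw [Finset.mul_sum]
      _ ≤ ENNReal.ofReal (5 * y / q) * ENNReal.ofReal (16 * √(1 / (|l₁| * |l₂|)) * D +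
          2 * (K ^ 2 * (16 * √(|l₂| / |l₁|) * q * (2 * D) / q))) := by
          gcongr
          rw [← ENNReal.ofReal_natCast]
          exact ENNReal.ofReal_le_ofReal hMle
      _ = ENNReal.ofReal (5 * y / q * (16 * √(1 / (|l₁| * |l₂|)) * D +
          2 * (K ^ 2 * (16 * √(|l₂| / |l₁|) * q * (2 * D) / q)))) := by
          rw [ENNReal.ofReal_mul (by positivity)]
      _ ≤ _ := by
          apply ENNReal.ofReal_le_ofReal
          have hKK : 1 ≤ K ^ 2 := one_le_pow₀ hK1
          calc _ = (80 * √(1 / (|l₁| * |l₂|)) * 1 + 320 * √(|l₂| / |l₁|) * K ^ 2) * y * D / q := by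
                field_simp; ring
            _ ≤ (80 * √(1 / (|l₁| * |l₂|)) * K ^ 2 + 320 * √(|l₂| / |l₁|) * K ^ 2) * y * D / q := by
                gcongr
            _ = _ := by ring

set_option maxHeartbeats 4000000 in
theorem measure_lemma (l₁ l₂ : ℝ) (hl₁ : l₁ ≠ 0) (hl₂ : l₂ ≠ 0)
    (hirr : Irrational (l₁ / l₂)) (ε : ℝ) (hε : 0 < ε) (c₁ c₂ : ℝ)
    (hc₁ : 0 < c₁) (hc₂ : 0 < c₂) :
    ∃ C > 0, ∃ X₀ : ℝ, ∀ X ≥ X₀, ∀ q m : ℕ, 0 < q →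
      (q : ℝ) = (GenContFract.of (l₁ / l₂)).dens m →
      X = (q : ℝ) ^ 3 →
      ∀ Z₁ Z₂ y : ℝ, 0 < y →
        X ^ ((5 : ℝ) / 6) * Real.log X ^ 5 ≤ Z₁ →
        X ^ ((5 : ℝ) / 6) * Real.log X ^ 5 ≤ Z₂ →
        ∀ A : Set ℝ, MeasurableSet A →
          A ⊆ {α : ℝ | y < |α| ∧ |α| ≤ 2 * y} →
          (∀ α ∈ A, ∃ a₁ a₂ : ℤ, ∃ q₁ q₂ : ℕ,
            0 < q₁ ∧ 0 < q₂ ∧ Int.gcd a₁ q₁ = 1 ∧ Int.gcd a₂ q₂ = 1 ∧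
            a₁ ≠ 0 ∧ a₂ ≠ 0 ∧
            (q₁ : ℝ) ≤ c₁ * (X * Real.log X ^ 4 / Z₁) ^ 2 ∧
            (q₂ : ℝ) ≤ c₁ * (X * Real.log X ^ 4 / Z₂) ^ 2 ∧
            |(q₁ : ℝ) * l₁ * α - a₁| ≤ c₂ * X * Real.log X ^ 10 / Z₁ ^ 2 ∧
            |(q₂ : ℝ) * l₂ * α - a₂| ≤ c₂ * X * Real.log X ^ 10 / Z₂ ^ 2) →
          volume A ≤ ENNReal.ofReal (C * y * X ^ ((8 : ℝ) / 3 + ε) / (Z₁ ^ 2 * Z₂ ^ 2)) := by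
  have hL₁ : 0 < |l₁| := abs_pos.2 hl₁
  have hL₂ : 0 < |l₂| := abs_pos.2 hl₂
  obtain ⟨Cd, hCd, hdiv⟩ := divisor_bound (ε / 4) (by positivity)
  set cW : ℝ := 1 + 4 * (|l₁| + |l₂|) * c₁ ^ 2 with hcW
  have hcW1 : 1 ≤ cW := by
    have : 0 ≤ 4 * (|l₁| + |l₂|) * c₁ ^ 2 := by positivity
    linarith
  set C1 : ℝ := 320 * √(|l₂| / |l₁|) + 80 * √(1 / (|l₁| * |l₂|)) with hC1
  have hC1pos : 0 < C1 := by positivity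
  set B : ℝ := 1 + 12 * c₂ + 8 * c₁ * c₂ * (|l₁| + |l₂|) / |l₂| + 4 * c₁ * c₂ * |l₂| / |l₁| +
    4 * c₁ * c₂ * |l₁| / |l₂| with hB
  refine ⟨C1 * (Cd ^ 2 * cW ^ (ε / 2)) * (c₁ * c₂) * (36 / ε) ^ 18, by positivity, Real.exp B, ?_⟩
  intro X hX q m hq hqm hXq Z₁ Z₂ y hy hZ₁ hZ₂ A hAm hAsub hAA
  have hq1 : (1 : ℝ) ≤ q := by exact_mod_cast hq
  have hq0 : (0 : ℝ) < q := by linarith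
  have hXpos : 0 < X := (Real.exp_pos B).trans_le hX
  set L := Real.log X with hLdef
  have hLB : B ≤ L := by rw [hLdef, Real.le_log_iff_exp_le hXpos]; exact hX
  have p1 : 0 < 12 * c₂ := by positivity
  have p2 : 0 < 8 * c₁ * c₂ * (|l₁| + |l₂|) / |l₂| := by positivity
  have p3 : 0 < 4 * c₁ * c₂ * |l₂| / |l₁| := by positivity
  have p4 : 0 < 4 * c₁ * c₂ * |l₁| / |l₂| := by positivity
  have hL1 : 1 < L := by linarith
  have hL0 : 0 < L := by linarith
  have hLL : L ≤ L ^ 2 := by nlinarith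
  have hLq : L ≤ 3 * q := by
    rw [hLdef, hXq, Real.log_pow]
    have := Real.log_le_sub_one_of_pos hq0
    push_cast
    linarith
  have hX53 : (X ^ ((5 : ℝ) / 6)) ^ 2 = (q : ℝ) ^ 5 := by
    rw [hXq, ← Real.rpow_natCast, ← Real.rpow_natCast, ← Real.rpow_mul (by positivity),
      ← Real.rpow_mul (by positivity), ← Real.rpow_natCast]
    congr 1; norm_num
  have hZsq : ∀ Z : ℝ, X ^ ((5 : ℝ) / 6) * L ^ 5 ≤ Z → 0 < Z ∧ (q : ℝ) ^ 5 * L ^ 10 ≤ Z ^ 2 := by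
    intro Z hZ
    have h0 : 0 < X ^ ((5 : ℝ) / 6) * L ^ 5 := by positivity
    refine ⟨h0.trans_le hZ, ?_⟩
    calc (q : ℝ) ^ 5 * L ^ 10 = (X ^ ((5 : ℝ) / 6) * L ^ 5) ^ 2 := by rw [mul_pow, hX53]; ring
      _ ≤ Z ^ 2 := by gcongr
  obtain ⟨hZ₁0, hZ₁s⟩ := hZsq Z₁ hZ₁
  obtain ⟨hZ₂0, hZ₂s⟩ := hZsq Z₂ hZ₂
  have hδle : ∀ Z : ℝ, 0 < Z → (q : ℝ) ^ 5 * L ^ 10 ≤ Z ^ 2 →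
      2 * (c₂ * X * L ^ 10 / Z ^ 2) ≤ 1 / 2 := by
    intro Z hZ hZs
    have h1 : c₂ * X * L ^ 10 / Z ^ 2 ≤ c₂ * X * L ^ 10 / ((q : ℝ) ^ 5 * L ^ 10) := by gcongr
    have h2 : c₂ * X * L ^ 10 / ((q : ℝ) ^ 5 * L ^ 10) = c₂ / q ^ 2 := by
      rw [hXq]; field_simp
    have h3 : c₂ / (q : ℝ) ^ 2 ≤ 1 / 4 := by
      rw [div_le_iff₀ (by positivity)]
      nlinarith
    linarith
  have hRle : ∀ Z : ℝ, 0 < Z → (q : ℝ) ^ 5 * L ^ 10 ≤ Z ^ 2 →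
      c₁ * (X * L ^ 4 / Z) ^ 2 ≤ c₁ * q := by
    intro Z hZ hZs
    gcongr
    rw [div_pow, div_le_iff₀ (by positivity), hXq]
    calc ((q : ℝ) ^ 3 * L ^ 4) ^ 2 = q * (q ^ 5 * L ^ 8) := by ring
      _ ≤ q * (q ^ 5 * L ^ 10) := by
        gcongr
        · exact hL1.le
        · norm_num
      _ ≤ _ := by gcongr
  set δ₁ := c₂ * X * L ^ 10 / Z₁ ^ 2 with hδ₁
  set δ₂ := c₂ * X * L ^ 10 / Z₂ ^ 2 with hδ₂
  set R₁ := c₁ * (X * L ^ 4 / Z₁) ^ 2 with hR₁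
  set R₂ := c₁ * (X * L ^ 4 / Z₂) ^ 2 with hR₂
  have hδ₁0 : 0 ≤ δ₁ := by positivity
  have hδ₂0 : 0 ≤ δ₂ := by positivity
  have hR₁0 : 0 ≤ R₁ := by positivity
  have hR₂0 : 0 ≤ R₂ := by positivity
  have hN₁ : (⌊R₁⌋₊ : ℝ) ≤ R₁ := Nat.floor_le hR₁0
  have hN₂ : (⌊R₂⌋₊ : ℝ) ≤ R₂ := Nat.floor_le hR₂0
  have hR₁q : R₁ ≤ c₁ * q := hRle Z₁ hZ₁0 hZ₁s
  have hR₂q : R₂ ≤ c₁ * q := hRle Z₂ hZ₂0 hZ₂s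
  set G := c₁ * c₂ * (X ^ 3 * L ^ 18 / (Z₁ ^ 2 * Z₂ ^ 2)) with hG
  have hG0 : 0 ≤ G := by positivity
  have hG1 : δ₁ * R₂ = G := by
    rw [hδ₁, hR₂, hG]; field_simp
  have hG2 : δ₂ * R₁ = G := by
    rw [hδ₂, hR₁, hG]; field_simp
  have hGle : G ≤ c₁ * c₂ / (q * L ^ 2) := by
    have h1 : X ^ 3 * L ^ 18 / (Z₁ ^ 2 * Z₂ ^ 2) ≤
        X ^ 3 * L ^ 18 / (((q : ℝ) ^ 5 * L ^ 10) * ((q : ℝ) ^ 5 * L ^ 10)) := by gcongr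
    have h2 : X ^ 3 * L ^ 18 / (((q : ℝ) ^ 5 * L ^ 10) * ((q : ℝ) ^ 5 * L ^ 10)) =
        1 / (q * L ^ 2) := by
      rw [hXq]; field_simp
    rw [hG]
    calc _ ≤ c₁ * c₂ * (1 / (q * L ^ 2)) := by rw [← h2]; gcongr
      _ = _ := by ring
  have hGqL : G * q * L ≤ c₁ * c₂ := by
    rw [le_div_iff₀ (by positivity)] at hGle
    have : G * q * L ≤ G * q * L ^ 2 := by gcongr
    linarith
  have hGL : G * L ≤ c₁ * c₂ := by
    have : G * L * 1 ≤ G * L * q := by gcongr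
    linarith
  have hNG1 : δ₁ * ⌊R₂⌋₊ ≤ G := by rw [← hG1]; gcongr
  have hNG2 : δ₂ * ⌊R₁⌋₊ ≤ G := by rw [← hG2]; gcongr
  have hcc : 0 < c₁ * c₂ := by positivity
  -- the smallness conditions
  have small1 : 2 * δ₁ * ⌊R₂⌋₊ * |l₂| + 2 * δ₂ * ⌊R₁⌋₊ * |l₁| < |l₂| / (4 * q) := by
    have h1 : 2 * δ₁ * ⌊R₂⌋₊ * |l₂| + 2 * δ₂ * ⌊R₁⌋₊ * |l₁| ≤ 2 * G * (|l₁| + |l₂|) := by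
      have a := mul_le_mul_of_nonneg_right hNG1 hL₂.le
      have b := mul_le_mul_of_nonneg_right hNG2 hL₁.le
      linarith
    refine h1.trans_lt ?_
    rw [lt_div_iff₀ (by positivity)]
    have h2 : 8 * c₁ * c₂ * (|l₁| + |l₂|) / |l₂| < L := by linarith
    rw [div_lt_iff₀ hL₂] at h2
    have h3 : (G * q * L) * (8 * (|l₁| + |l₂|)) ≤ c₁ * c₂ * (8 * (|l₁| + |l₂|)) := by gcongr
    have h4 : (2 * G * (|l₁| + |l₂|) * (4 * q)) * L < |l₂| * L := by linarith
    exact lt_of_mul_lt_mul_right h4 hL0.le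
  have small2 : 2 * (2 * δ₁) * ⌊R₂⌋₊ * |l₂| < |l₁| := by
    have h1 : 2 * (2 * δ₁) * ⌊R₂⌋₊ * |l₂| ≤ 4 * G * |l₂| := by
      have a := mul_le_mul_of_nonneg_right hNG1 hL₂.le
      linarith
    refine h1.trans_lt ?_
    have h2 : 4 * c₁ * c₂ * |l₂| / |l₁| < L := by linarith
    rw [div_lt_iff₀ hL₁] at h2
    have h3 : (G * L) * (4 * |l₂|) ≤ c₁ * c₂ * (4 * |l₂|) := by gcongr
    have h4 : (4 * G * |l₂|) * L < |l₁| * L := by linarith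
    exact lt_of_mul_lt_mul_right h4 hL0.le
  have small3 : 2 * (2 * δ₂) * ⌊R₁⌋₊ * |l₁| < |l₂| := by
    have h1 : 2 * (2 * δ₂) * ⌊R₁⌋₊ * |l₁| ≤ 4 * G * |l₁| := by
      have a := mul_le_mul_of_nonneg_right hNG2 hL₁.le
      linarith
    refine h1.trans_lt ?_
    have h2 : 4 * c₁ * c₂ * |l₁| / |l₂| < L := by linarith
    rw [div_lt_iff₀ hL₂] at h2
    have h3 : (G * L) * (4 * |l₁|) ≤ c₁ * c₂ * (4 * |l₁|) := by gcongr
    have h4 : (4 * G * |l₁|) * L < |l₂| * L := by linarith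
    exact lt_of_mul_lt_mul_right h4 hL0.le
  have hleg : ∀ n : ℕ, 0 < n → ∀ k : ℤ,
      |(n : ℝ) * (|l₁| / |l₂|) - k| < 1 / (2 * q) → q < 2 * n := by
    intro n hn k hk
    rw [← abs_div] at hk
    rcases abs_choice (l₁ / l₂) with h | h
    · rw [h] at hk
      exact legendre _ hirr q m hq hqm n hn k hk
    · rw [h] at hk
      apply legendre _ hirr q m hq hqm n hn (-k)
      rw [← abs_neg]
      push_cast
      convert hk using 2
      ring
  have hNN : (⌊R₁⌋₊ : ℝ) * ⌊R₂⌋₊ ≤ (c₁ * q) * (c₁ * q) :=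
    mul_le_mul (hN₁.trans hR₁q) (hN₂.trans hR₂q) (by positivity) (by positivity)
  have hWgen : ∀ l : ℝ, 0 ≤ l → l ≤ |l₁| + |l₂| →
      2 * l * ⌊R₁⌋₊ * ⌊R₂⌋₊ * (2 * q) ≤ cW * X := by
    intro l hl hle
    calc 2 * l * ⌊R₁⌋₊ * ⌊R₂⌋₊ * (2 * q) = 4 * l * (⌊R₁⌋₊ * ⌊R₂⌋₊) * q := by ring
      _ ≤ 4 * (|l₁| + |l₂|) * ((c₁ * q) * (c₁ * q)) * q := by gcongr
      _ = 4 * (|l₁| + |l₂|) * c₁ ^ 2 * X := by rw [hXq]; ring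
      _ ≤ cW * X := by gcongr; linarith
  have hX1 : 1 ≤ X := by rw [hXq]; exact one_le_pow₀ hq1
  set K : ℝ := Cd * (cW * X) ^ (ε / 4) with hKdef
  have hWX1 : 1 ≤ cW * X := one_le_mul_of_one_le_of_one_le hcW1 hX1
  have hK1 : 1 ≤ K :=
    one_le_mul_of_one_le_of_one_le hCd (Real.one_le_rpow hWX1 (by positivity))
  have hK : ∀ n : ℕ, 0 < n → (n : ℝ) ≤ cW * X → (n.divisors.card : ℝ) ≤ K := by
    intro n hn hnW
    refine (hdiv n hn).trans ?_
    rw [hKdef]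
    gcongr
  have hmain := mid l₁ l₂ δ₁ δ₂ y K (cW * X) hl₁ hl₂ hy hδ₁0 hδ₂0 (hδle Z₁ hZ₁0 hZ₁s)
    (hδle Z₂ hZ₂0 hZ₂s) q ⌊R₁⌋₊ ⌊R₂⌋₊ hq small1 small2 small3 hleg
    (hWgen _ hL₁.le (by linarith)) (hWgen _ hL₂.le (by linarith)) hK1 hK A
    (fun α hα => (hAsub hα).2) (by
      intro α hα
      obtain ⟨a₁, a₂, q₁, q₂, h1, h2, -, -, h3, h4, h5, h6, h7, h8⟩ := hAA α hα
      exact ⟨a₁, a₂, q₁, q₂, h1, h2, h3, h4, Nat.le_floor h5, Nat.le_floor h6, h7, h8⟩)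
  refine hmain.trans (ENNReal.ofReal_le_ofReal ?_)
  have hD : √(δ₁ * δ₂ * ⌊R₁⌋₊ * ⌊R₂⌋₊) ≤ G := by
    apply Real.sqrt_le_iff.2 ⟨hG0, ?_⟩
    calc δ₁ * δ₂ * ⌊R₁⌋₊ * ⌊R₂⌋₊ = (δ₁ * ⌊R₂⌋₊) * (δ₂ * ⌊R₁⌋₊) := by ring
      _ ≤ G * G := mul_le_mul hNG1 hNG2 (by positivity) hG0
      _ = G ^ 2 := by ring
  have hK2 : K ^ 2 = Cd ^ 2 * cW ^ (ε / 2) * X ^ (ε / 2) := by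
    rw [hKdef, mul_pow, ← Real.rpow_natCast ((cW * X) ^ (ε / 4)), ← Real.rpow_mul (by positivity),
      Real.mul_rpow (by positivity) (by positivity)]
    have : ε / 4 * ((2 : ℕ) : ℝ) = ε / 2 := by push_cast; ring
    rw [this]; ring
  have hL18 : L ^ 18 ≤ X ^ (ε / 2) * (36 / ε) ^ 18 := by
    have h1 : L ≤ X ^ (ε / 36) / (ε / 36) := Real.log_le_rpow_div hXpos.le (by positivity)
    calc L ^ 18 ≤ (X ^ (ε / 36) / (ε / 36)) ^ 18 := by gcongr
      _ = (X ^ (ε / 36)) ^ 18 * (36 / ε) ^ 18 := by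
          rw [← mul_pow]; congr 1; field_simp
      _ = _ := by
          congr 1
          rw [← Real.rpow_natCast, ← Real.rpow_mul (by positivity)]
          congr 1; push_cast; ring
  have hX83 : X ^ ((8 : ℝ) / 3 + ε) = X ^ 3 / q * (X ^ (ε / 2) * X ^ (ε / 2)) := by
    rw [← Real.rpow_add hXpos, Real.rpow_add hXpos]
    have e1 : ε / 2 + ε / 2 = ε := by ring
    have e2 : X ^ ((8 : ℝ) / 3) = (q : ℝ) ^ 8 := by
      rw [hXq, ← Real.rpow_natCast, ← Real.rpow_mul (by positivity), ← Real.rpow_natCast]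
      congr 1; norm_num
    rw [e1, e2, hXq]
    field_simp
  calc C1 * K ^ 2 * y * √(δ₁ * δ₂ * ⌊R₁⌋₊ * ⌊R₂⌋₊) / q ≤ C1 * K ^ 2 * y * G / q := by gcongr
    _ ≤ C1 * K ^ 2 * y * (c₁ * c₂ * (X ^ 3 * (X ^ (ε / 2) * (36 / ε) ^ 18) /
        (Z₁ ^ 2 * Z₂ ^ 2))) / q := by rw [hG]; gcongr
    _ = _ := by rw [hK2, hX83]; field_simp
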